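/- Let a ∈ ℤ, let α > 0 with n-1 < α < n for some positive integer n, let β > 0, γ > 0, and let λ be a real number with |λ| < 1. Then for every k ∈ ℕ_{a+1}, the γ-th nabla fractional sum of the discrete Mittag–Leffler function satisfies ₐ∇ₖ^{-γ} F_{α,β}(λ,k,a) = F_{α,β+γ}(λ,k,a). -/

import Mathlib

/-!
Where `Γ` has no pole, `Γ(m+x) / (Γ(x) m!) = x(x+1)⋯(x+m-1)/m!`, which is `Ring.multichoose x m`.
At `k = a + 1 + m` this turns the Mittag–Leffler function into `∑' j, λ^j * multichoose (jα+β) m`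
and the `γ`-th nabla sum into the convolution with `i ↦ multichoose γ i`. The coefficients are
polynomials in `j`, so the series converge for `|λ| < 1` and the finite convolution can be carried
out inside the series, where it is the Chu–Vandermonde identity.
-/

/-- The rising function `p^{q̄} = Γ(p+q)/Γ(p)`. -/
noncomputable def rise (p : ℤ) (q : ℝ) : ℝ :=
  Real.Gamma ((p : ℝ) + q) / Real.Gamma (p : ℝ)

/-- The discrete Mittag–Leffler function
`F_{α,β}(λ,k,a) = ∑_{j=0}^∞ λ^j (k-a)^{\overline{jα+β-1}}/Γ(jα+β)`. -/
noncomputable def discML (α β lam : ℝ) (k a : ℤ) : ℝ :=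
  ∑' j : ℕ, lam ^ j * rise (k - a) ((j : ℝ) * α + β - 1) / Real.Gamma ((j : ℝ) * α + β)

/-- The `γ`-th nabla fractional sum
`ₐ∇ₖ^{-γ} f(k) = ∑_{j=0}^{k-a-1} (Γ(j+γ)/(Γ(γ)Γ(j+1))) f(k-j)`. -/
noncomputable def nsum (a : ℤ) (γ : ℝ) (f : ℤ → ℝ) (k : ℤ) : ℝ :=
  ∑ j ∈ Finset.range (k - a).toNat,
    (Real.Gamma ((j : ℝ) + γ) / (Real.Gamma γ * Real.Gamma ((j : ℝ) + 1))) * f (k - j)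

open Finset Polynomial

lemma add_multichoose_eq {R : Type*} [Ring R] [BinomialRing R] {r s : R} (n : ℕ)
    (h : Commute r s) :
    Ring.multichoose (r + s) n =
      ∑ p ∈ antidiagonal n, Ring.multichoose r p.1 * Ring.multichoose s p.2 := by
  have hchoose (t : R) (i : ℕ) : Ring.multichoose t i = Int.negOnePow i • Ring.choose (-t) i := by
    rw [Ring.choose_neg', smul_smul, ← Int.negOnePow_add, Int.negOnePow_even _ ⟨i, rfl⟩, one_smul]
  rw [hchoose, neg_add, Ring.add_choose_eq n h.neg_left.neg_right, smul_sum]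
  refine sum_congr rfl fun p hp => ?_
  rw [hchoose, hchoose, smul_mul_smul_comm, ← Int.negOnePow_add, ← mem_antidiagonal.mp hp,
    Nat.cast_add]

lemma multichoose_eq_ascPochhammer_eval_div {K : Type*} [Field K] [CharZero K] (x : K) (n : ℕ) :
    Ring.multichoose x n = (ascPochhammer K n).eval x / n.factorial := by
  rw [eq_div_iff (Nat.cast_ne_zero.mpr n.factorial_ne_zero), mul_comm, ← nsmul_eq_mul,
    Ring.factorial_nsmul_multichoose_eq_ascPochhammer, ascPochhammer_smeval_eq_eval]

lemma Gamma_add_natCast_div_Gamma {x : ℝ} (hx : ∀ i : ℕ, x ≠ -i) (n : ℕ) :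
    Real.Gamma (x + n) / Real.Gamma x = (ascPochhammer ℝ n).eval x := by
  have h := Complex.Gamma_add_nat_div_Gamma_eq (n := n) (x : ℂ) fun i => by exact_mod_cast hx i
  have heval : (ascPochhammer ℂ n).eval (x : ℂ) = ((ascPochhammer ℝ n).eval x : ℝ) := by
    rw [← ascPochhammer_map Complex.ofRealHom]
    exact eval_map_apply Complex.ofRealHom x
  rw [heval, ← Complex.ofReal_natCast, ← Complex.ofReal_add, Complex.Gamma_ofReal,
    Complex.Gamma_ofReal] at h
  exact_mod_cast h

lemma Gamma_div_Gamma_mul_Gamma_eq_multichoose {x : ℝ} (hx : ∀ i : ℕ, x ≠ -i) (n : ℕ) :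
    Real.Gamma (n + x) / (Real.Gamma x * Real.Gamma (n + 1)) = Ring.multichoose x n := by
  rw [multichoose_eq_ascPochhammer_eval_div, ← Gamma_add_natCast_div_Gamma hx,
    Real.Gamma_nat_eq_factorial, div_div, add_comm]

lemma summable_eval_natCast_mul_geometric {R : Type*} [NormedRing R] [HasSummableGeomSeries R]
    (p : R[X]) {r : R} (hr : ‖r‖ < 1) : Summable fun j : ℕ => p.eval (j : R) * r ^ j := by
  simp only [eval_eq_sum_range, sum_mul, mul_assoc]
  exact summable_sum fun i _ => (summable_pow_mul_geometric_of_norm_lt_one i hr).mul_left _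

lemma summable_geometric_mul_multichoose {K : Type*} [NormedField K] [CharZero K] (α β : K)
    {r : K} (hr : ‖r‖ < 1) (n : ℕ) :
    Summable fun j : ℕ => r ^ j * Ring.multichoose (j * α + β) n := by
  have h := (summable_eval_natCast_mul_geometric
    ((ascPochhammer K n).comp (X * C α + C β)) hr).div_const (n.factorial : K)
  refine h.congr fun j => ?_
  simp only [eval_comp, eval_add, eval_mul, eval_X, eval_C, multichoose_eq_ascPochhammer_eval_div]
  ring

lemma discML_eq_tsum_multichoose {α β : ℝ} (hpole : ∀ j i : ℕ, (j : ℝ) * α + β ≠ -i) (lam : ℝ)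
    (a : ℤ) (m : ℕ) :
    discML α β lam (a + 1 + m) a = ∑' j : ℕ, lam ^ j * Ring.multichoose (j * α + β) m := by
  refine tsum_congr fun j => ?_
  have hbase : ((a + 1 + m - a : ℤ) : ℝ) = m + 1 := by push_cast; ring
  have hshift : (m : ℝ) + 1 + (j * α + β - 1) = m + (j * α + β) := by ring
  rw [← Gamma_div_Gamma_mul_Gamma_eq_multichoose (hpole j), rise, hbase, hshift, mul_div_assoc,
    div_div, mul_comm (Real.Gamma (m + 1))]

lemma nsum_eq_sum_antidiagonal {γ : ℝ} (hγ : ∀ i : ℕ, γ ≠ -i) (f : ℤ → ℝ) (a : ℤ) (m : ℕ) :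
    nsum a γ f (a + 1 + m) =
      ∑ p ∈ antidiagonal m, Ring.multichoose γ p.1 * f (a + 1 + p.2) := by
  have hlen : (a + 1 + m - a).toNat = m + 1 := by omega
  rw [nsum, hlen, Nat.sum_antidiagonal_eq_sum_range_succ_mk]
  refine sum_congr rfl fun i hi => ?_
  have harg : a + 1 + m - i = a + 1 + (m - i : ℕ) := by
    have := mem_range.mp hi
    omega
  rw [Gamma_div_Gamma_mul_Gamma_eq_multichoose hγ, harg]

theorem nabla_fracsum_discML_general {α β γ lam : ℝ} (hγ : ∀ i : ℕ, γ ≠ -i)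
    (hβ : ∀ j i : ℕ, (j : ℝ) * α + β ≠ -i) (hβγ : ∀ j i : ℕ, (j : ℝ) * α + (β + γ) ≠ -i)
    (hlam : |lam| < 1) {a k : ℤ} (hk : a + 1 ≤ k) :
    nsum a γ (fun l => discML α β lam l a) k = discML α (β + γ) lam k a := by
  obtain ⟨m, rfl⟩ := Int.le.dest hk
  have hvandermonde (j : ℕ) : Ring.multichoose (j * α + (β + γ)) m =
      ∑ p ∈ antidiagonal m, Ring.multichoose γ p.1 * Ring.multichoose (j * α + β) p.2 := by
    rw [← add_multichoose_eq m (Commute.all _ _)]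
    ring_nf
  calc nsum a γ (fun l => discML α β lam l a) (a + 1 + m)
    _ = ∑ p ∈ antidiagonal m, Ring.multichoose γ p.1 *
          ∑' j : ℕ, lam ^ j * Ring.multichoose (j * α + β) p.2 := by
      simp only [nsum_eq_sum_antidiagonal hγ, discML_eq_tsum_multichoose hβ]
    _ = ∑' j : ℕ, ∑ p ∈ antidiagonal m,
          Ring.multichoose γ p.1 * (lam ^ j * Ring.multichoose (j * α + β) p.2) := by
      simp only [← tsum_mul_left]
      exact (Summable.tsum_finsetSum fun p _ =>
        (summable_geometric_mul_multichoose α β hlam p.2).mul_left _).symm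
    _ = ∑' j : ℕ, lam ^ j * Ring.multichoose (j * α + (β + γ)) m := by
      simp only [hvandermonde, mul_sum, mul_left_comm]
    _ = discML α (β + γ) lam (a + 1 + m) a := (discML_eq_tsum_multichoose hβγ lam a m).symm

/-- for `n-1 < α < n`, `β > 0`, `γ > 0` and `|λ| < 1`, the `γ`-th nabla
fractional sum of the discrete Mittag–Leffler function satisfies
`ₐ∇ₖ^{-γ} F_{α,β}(λ,k,a) = F_{α,β+γ}(λ,k,a)` for every `k ∈ ℕ_{a+1}`. -/
theorem nabla_fracsum_discML (a : ℤ) (n : ℕ) (hn : 0 < n) (α : ℝ)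
    (hα1 : (n : ℝ) - 1 < α) (hα2 : α < n) (β γ : ℝ) (hβ : 0 < β) (hγ : 0 < γ)
    (lam : ℝ) (hlam : |lam| < 1) (k : ℤ) (hk : a + 1 ≤ k) :
    nsum a γ (fun j => discML α β lam j a) k = discML α (β + γ) lam k a := by
  have hα : 0 < α := by linarith [(Nat.one_le_cast (α := ℝ)).mpr hn]
  have ne_neg {x : ℝ} (hx : 0 < x) (i : ℕ) : x ≠ -i := by linarith [i.cast_nonneg (α := ℝ)]
  exact nabla_fracsum_discML_general (ne_neg hγ) (fun j => ne_neg (by positivity))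
    (fun j => ne_neg (by positivity)) hlam hk
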